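/- Let l_c > 0 and let z : ℝ → ℝ be differentiable with z(0) = 1, z(x) → 0 as x → +∞ and as x → −∞, and such that z² and (z')² are integrable on ℝ. Then ∫_ℝ [ (1/(2 l_c)) z(x)² + (l_c/2) z'(x)² ] dx ≥ 1; that is, the exponential profile exp(−|x|/l_c) minimizes the regularized crack surface among all admissible one-dimensional crack profiles. -/

import Mathlib

open MeasureTheory Filter

/-!
For `g = ‖z‖²` with `g` and `g'` integrable, `g` vanishes at `±∞`, so the fundamental theorem of
calculus on either side of `a` gives `2 ‖z a‖² ≤ ∫ |g'|`. By Young's inequality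
`|g'| ≤ 2 ‖z‖ ‖z'‖` is at most twice the crack-surface density.
-/

section

variable {E : Type*} [NormedAddCommGroup E] [NormedSpace ℝ E] [CompleteSpace E]
  {g : ℝ → E} {a : ℝ}

theorem norm_le_setIntegral_Ioi_norm_deriv (hcont : ContinuousWithinAt g (Set.Ici a) a)
    (hdiff : ∀ x ∈ Set.Ioi a, DifferentiableAt ℝ g x) (hg : IntegrableOn g (Set.Ioi a))
    (hg' : IntegrableOn (deriv g) (Set.Ioi a)) :
    ‖g a‖ ≤ ∫ x in Set.Ioi a, ‖deriv g x‖ := by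
  have hderiv : ∀ x ∈ Set.Ioi a, HasDerivAt g (deriv g x) x := fun x hx => (hdiff x hx).hasDerivAt
  have hlim : Tendsto g atTop (nhds 0) :=
    tendsto_zero_of_hasDerivAt_of_integrableOn_Ioi hderiv hg' hg
  calc ‖g a‖ = ‖∫ x in Set.Ioi a, deriv g x‖ := by
        rw [integral_Ioi_of_hasDerivAt_of_tendsto hcont hderiv hg' hlim, zero_sub, norm_neg]
    _ ≤ ∫ x in Set.Ioi a, ‖deriv g x‖ := norm_integral_le_integral_norm _

theorem norm_le_setIntegral_Iic_norm_deriv (hcont : ContinuousWithinAt g (Set.Iic a) a)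
    (hdiff : ∀ x ∈ Set.Iio a, DifferentiableAt ℝ g x) (hg : IntegrableOn g (Set.Iic a))
    (hg' : IntegrableOn (deriv g) (Set.Iic a)) :
    ‖g a‖ ≤ ∫ x in Set.Iic a, ‖deriv g x‖ := by
  have hderiv : ∀ x ∈ Set.Iio a, HasDerivAt g (deriv g x) x := fun x hx => (hdiff x hx).hasDerivAt
  have hsubset : Set.Iic (a - 1) ⊆ Set.Iio a := Set.Iic_subset_Iio.2 (sub_one_lt a)
  have hlim : Tendsto g atBot (nhds 0) :=
    tendsto_zero_of_hasDerivAt_of_integrableOn_Iic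
      (fun x hx => hderiv x (hsubset hx)) (hg'.mono_set (hsubset.trans Set.Iio_subset_Iic_self))
      (hg.mono_set (hsubset.trans Set.Iio_subset_Iic_self))
  calc ‖g a‖ = ‖∫ x in Set.Iic a, deriv g x‖ := by
        rw [integral_Iic_of_hasDerivAt_of_tendsto hcont hderiv hg' hlim, sub_zero]
    _ ≤ ∫ x in Set.Iic a, ‖deriv g x‖ := norm_integral_le_integral_norm _

theorem two_mul_norm_le_integral_norm_deriv (hcont : ContinuousAt g a)
    (hdiff : ∀ x ≠ a, DifferentiableAt ℝ g x) (hg : Integrable g) (hg' : Integrable (deriv g)) :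
    2 * ‖g a‖ ≤ ∫ x, ‖deriv g x‖ := by
  have hleft := norm_le_setIntegral_Iic_norm_deriv hcont.continuousWithinAt
    (fun x hx => hdiff x (ne_of_lt hx)) hg.integrableOn hg'.integrableOn
  have hright := norm_le_setIntegral_Ioi_norm_deriv hcont.continuousWithinAt
    (fun x hx => hdiff x (ne_of_gt hx)) hg.integrableOn hg'.integrableOn
  rw [← intervalIntegral.integral_Iic_add_Ioi hg'.norm.integrableOn hg'.norm.integrableOn]
  linarith

end

section

variable {E : Type*} [NormedAddCommGroup E] [InnerProductSpace ℝ E] {z : ℝ → E}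

theorem norm_deriv_norm_sq_le {x : ℝ} (hz : DifferentiableAt ℝ z x) :
    ‖deriv (fun y => ‖z y‖ ^ 2) x‖ ≤ 2 * ‖z x‖ * ‖deriv z x‖ := by
  rw [hz.hasDerivAt.norm_sq.deriv, norm_mul, Real.norm_two, mul_assoc]
  gcongr
  exact norm_inner_le_norm _ _

/-- Equality holds for the profile `exp (-|x - a| / lc)`, whose only kink is at `a`. -/
theorem crack_profile_minimizer_general {lc : ℝ} (hlc : 0 < lc) {a : ℝ} (hcont : ContinuousAt z a)
    (hdiff : ∀ x ≠ a, DifferentiableAt ℝ z x) (hint1 : Integrable (fun x => ‖z x‖ ^ 2))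
    (hint2 : Integrable (fun x => ‖deriv z x‖ ^ 2)) :
    ‖z a‖ ^ 2 ≤ ∫ x, (1 / (2 * lc) * ‖z x‖ ^ 2 + lc / 2 * ‖deriv z x‖ ^ 2) := by
  set density : ℝ → ℝ := fun x => 1 / (2 * lc) * ‖z x‖ ^ 2 + lc / 2 * ‖deriv z x‖ ^ 2
  have hdensity : Integrable (fun x => 2 * density x) :=
    ((hint1.const_mul _).add (hint2.const_mul _)).const_mul 2
  have hbound : ∀ᵐ x, ‖deriv (fun y => ‖z y‖ ^ 2) x‖ ≤ 2 * density x := by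
    filter_upwards [Measure.ae_ne volume a] with x hx
    calc ‖deriv (fun y => ‖z y‖ ^ 2) x‖ ≤ 2 * ‖z x‖ * ‖deriv z x‖ :=
          norm_deriv_norm_sq_le (hdiff x hx)
      _ ≤ lc⁻¹ * ‖z x‖ ^ 2 + lc⁻¹⁻¹ * ‖deriv z x‖ ^ 2 := two_mul_le_add_mul_sq (inv_pos.2 hlc)
      _ = 2 * density x := by
          simp only [density, inv_inv]
          field_simp
  have hderiv : Integrable (deriv fun y => ‖z y‖ ^ 2) :=
    hdensity.mono' (measurable_deriv _).aestronglyMeasurable hbound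
  have htwice : 2 * ‖z a‖ ^ 2 ≤ 2 * ∫ x, density x :=
    calc 2 * ‖z a‖ ^ 2 = 2 * ‖‖z a‖ ^ 2‖ := by rw [norm_pow, norm_norm]
      _ ≤ ∫ x, ‖deriv (fun y => ‖z y‖ ^ 2) x‖ :=
          two_mul_norm_le_integral_norm_deriv (hcont.norm.pow 2)
            (fun x hx => (hdiff x hx).norm_sq ℝ) hint1 hderiv
      _ ≤ ∫ x, 2 * density x := integral_mono_ae hderiv.norm hdensity hbound
      _ = 2 * ∫ x, density x := integral_const_mul 2 density
  linarith

end

/-- Among all differentiable one-dimensional crack profiles z with z(0) = 1, z → 0 at ±∞,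
and z², (z')² integrable, the regularized crack surface is at least one:
∫ [(1/(2l_c)) z² + (l_c/2) (z')²] dx ≥ 1; hence exp(−|x|/l_c) is a minimizer. -/
theorem crack_profile_minimizer (lc : ℝ) (hlc : 0 < lc)
    (z : ℝ → ℝ) (hdiff : Differentiable ℝ z) (h0 : z 0 = 1)
    (htop : Tendsto z atTop (nhds 0)) (hbot : Tendsto z atBot (nhds 0))
    (hint1 : Integrable (fun x : ℝ => (z x) ^ 2))
    (hint2 : Integrable (fun x : ℝ => (deriv z x) ^ 2)) :
    1 ≤ ∫ x : ℝ, (1 / (2 * lc) * (z x) ^ 2 + lc / 2 * (deriv z x) ^ 2) := by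
  simpa [h0] using crack_profile_minimizer_general hlc (hdiff 0).continuousAt (fun x _ => hdiff x)
    (by simpa using hint1) (by simpa using hint2)
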